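/- Let n, m be positive integers, let F ∈ ℝⁿ be a fixed load vector, and let K : ℝᵐ → Matrix n n ℝ be differentiable at a point x₀ with K(x) symmetric and invertible for all x in a neighborhood of x₀. Define the displacement U(x) = K(x)⁻¹ F and the compliance c(x) = Fᵀ U(x). Then c is differentiable at x₀ and, for every coordinate index e ∈ {1,…,m}, its partial derivative satisfies ∂c/∂x_e(x₀) = − U(x₀)ᵀ (∂K/∂x_e)(x₀) U(x₀). -/

import Mathlib

/-!
Near `x₀`, the state equation `K(x) U(x) = F` and the symmetry of `K(x₀)` give the exact identity
`c(x) - c(x₀) = - U(x₀)ᵀ (K(x) - K(x₀)) U(x)`.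
The factor `K(x) - K(x₀)` is differentiable and vanishes at `x₀`, so mere continuity of `U` at `x₀`
lets one differentiate the product (`hasFDerivAt_sub_mul_of_continuousAt`), as if `U` were frozen at
`U(x₀)`. Continuity of `U` follows from the continuity of matrix inversion at invertible matrices.
-/

open Matrix

attribute [local instance] Matrix.normedAddCommGroup Matrix.normedSpace

/-- A product rule requiring only continuity of the second factor, because the first one vanishes
at the base point. -/
theorem hasFDerivAt_sub_mul_of_continuousAt {E : Type*} [NormedAddCommGroup E] [NormedSpace ℝ E]
    {f g : E → ℝ} {f' : E →L[ℝ] ℝ} {x₀ : E} (hf : HasFDerivAt f f' x₀) (hg : ContinuousAt g x₀) :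
    HasFDerivAt (fun x => (f x - f x₀) * g x) (g x₀ • f') x₀ := by
  have h1 : HasFDerivAt (fun x => (f x - f x₀) * g x₀) (g x₀ • f') x₀ :=
    (hf.sub_const (f x₀)).mul_const (g x₀)
  have h2 : HasFDerivAt (fun x => (f x - f x₀) * (g x - g x₀)) (0 : E →L[ℝ] ℝ) x₀ := by
    rw [hasFDerivAt_iff_isLittleO]
    have hg0 : (fun x => g x - g x₀) =o[nhds x₀] (fun _ => (1 : ℝ)) := by
      rw [Asymptotics.isLittleO_one_iff]
      simpa using Filter.Tendsto.sub_const hg (g x₀)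
    have h := (hf.isBigO_sub.norm_right).mul_isLittleO hg0
    simpa using h
  have h3 := h1.add h2
  rw [add_zero] at h3
  refine h3.congr_of_eventuallyEq (Filter.Eventually.of_forall fun x => ?_)
  simp only [Pi.add_apply]
  ring

/-- For a fixed load `F` and a stiffness map `K` differentiable at `x₀`, with `K x`
symmetric and invertible near `x₀`, the compliance `c x = Fᵀ (K x)⁻¹ F` is differentiable
at `x₀` and its partial derivative in direction `e` is `− U(x₀)ᵀ (∂K/∂x_e)(x₀) U(x₀)`. -/
theorem compliance_partial_deriv
    (n m : ℕ) (hn : 0 < n) (hm : 0 < m)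
    (F : Fin n → ℝ)
    (K : (Fin m → ℝ) → Matrix (Fin n) (Fin n) ℝ)
    (x₀ : Fin m → ℝ)
    (hK : DifferentiableAt ℝ K x₀)
    (hsym : ∀ᶠ x in nhds x₀, (K x).IsSymm)
    (hinv : ∀ᶠ x in nhds x₀, IsUnit (K x))
    (U : (Fin m → ℝ) → Fin n → ℝ)
    (hU : ∀ x, U x = (K x)⁻¹.mulVec F)
    (c : (Fin m → ℝ) → ℝ)
    (hc : ∀ x, c x = F ⬝ᵥ U x) :
    DifferentiableAt ℝ c x₀ ∧
      ∀ e : Fin m,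
        fderiv ℝ c x₀ (Pi.single e 1) =
          -(U x₀ ⬝ᵥ (fderiv ℝ K x₀ (Pi.single e 1)).mulVec (U x₀)) := by
  have hK0 : IsUnit (K x₀).det := (Matrix.isUnit_iff_isUnit_det _).1 hinv.self_of_nhds
  have hKU : ∀ᶠ x in nhds x₀, (K x) *ᵥ U x = F := by
    filter_upwards [hinv] with x hx
    rw [hU, Matrix.mulVec_mulVec,
      Matrix.mul_nonsing_inv _ ((Matrix.isUnit_iff_isUnit_det _).1 hx), Matrix.one_mulVec]
  have hUc : ContinuousAt U x₀ := by
    have hcK : ContinuousAt K x₀ := hK.continuousAt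
    have hinvc : ContinuousAt (fun x => (K x)⁻¹) x₀ := by
      simp only [Matrix.inv_def, Ring.inverse_eq_inv']
      have hdet : ContinuousAt (fun x => (K x).det) x₀ :=
        (Continuous.matrix_det continuous_id).continuousAt.comp hcK
      have hadj : ContinuousAt (fun x => (K x).adjugate) x₀ :=
        (Continuous.matrix_adjugate continuous_id).continuousAt.comp hcK
      exact (hdet.inv₀ hK0.ne_zero).smul hadj
    have hmv : Continuous fun A : Matrix (Fin n) (Fin n) ℝ => A *ᵥ F :=
      Continuous.matrix_mulVec continuous_id continuous_const
    rw [funext hU]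
    exact hmv.continuousAt.comp hinvc
  have hentry : ∀ i j, HasFDerivAt (fun x => K x i j)
      ((ContinuousLinearMap.proj (R := ℝ) (φ := fun _ : Fin n => ℝ) j).comp
        ((ContinuousLinearMap.proj (R := ℝ) (φ := fun _ : Fin n => Fin n → ℝ) i).comp
          (fderiv ℝ K x₀))) x₀ := fun i j =>
    hasFDerivAt_pi'.1 (hasFDerivAt_pi'.1 hK.hasFDerivAt i) j
  have hdiff : ∀ᶠ x in nhds x₀,
      c x = c x₀ - ∑ i, ∑ j, U x₀ i * ((K x i j - K x₀ i j) * U x j) := by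
    filter_upwards [hKU] with x hx
    have hsum : ∑ i, ∑ j, U x₀ i * ((K x i j - K x₀ i j) * U x j)
        = U x₀ ⬝ᵥ (K x - K x₀) *ᵥ U x := by
      simp [dotProduct, Matrix.mulVec, Finset.mul_sum]
    -- Symmetry of `K x₀` moves it from `U x` onto `U x₀`.
    have hsymm : U x₀ ⬝ᵥ K x₀ *ᵥ U x = F ⬝ᵥ U x := by
      rw [Matrix.dotProduct_mulVec, ← Matrix.mulVec_transpose, hsym.self_of_nhds.eq,
        hKU.self_of_nhds]
    rw [hsum, Matrix.sub_mulVec, dotProduct_sub, hx, hsymm, hc, hc, dotProduct_comm (U x₀) F]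
    ring
  have hder := ((HasFDerivAt.fun_sum (u := Finset.univ) fun i _ =>
    HasFDerivAt.fun_sum (u := Finset.univ) fun j _ =>
      (hasFDerivAt_sub_mul_of_continuousAt (hentry i j)
        ((continuous_apply j).continuousAt.comp hUc)).const_mul (U x₀ i)).const_sub
          (c x₀)).congr_of_eventuallyEq hdiff
  refine ⟨hder.differentiableAt, fun e => ?_⟩
  rw [hder.fderiv]
  simp [dotProduct, Matrix.mulVec, Finset.mul_sum, mul_comm]
  rfl
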